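/- Let w and e be positive integers with e < w, and let q be a prime power with q ≥ 2w−e−1. Then there exists a (qw, q−1, w)-CPC code of size q^{w−e−1} in which any two distinct codewords from the union of all codesets have Hamming distance at least 2e+2 (so the code can correct e transmission errors). -/

import Mathlib

/-!
The code is a punctured Reed–Solomon code read as a family of graphs. Put `m = w - e - 1` and fix
`w + m = 2w - e - 1` distinct points of the field with `q` elements. A polynomial of degree at most
`m` gives the graph of its values at the first `w` points, a `w`-subset of `F × Fin w`, and the
codeset containing it is determined by its values at the other `m` points.

Two distinct polynomials of degree at most `m` agree at no more than `m` points, so their graphs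
differ in at least `2 (w - m) = 2e + 2` coordinates; in particular the codesets are disjoint. Two
polynomials in the same codeset already agree at the `m` extra points, hence nowhere else, so each
codeset consists of `q` pairwise disjoint supports and `q - 1` coordinates cannot meet all of them.
Lagrange interpolation provides the `q` members of each codeset. The polynomial part is
`exists_rs_family`, the counting of coordinates `two_mul_le_hammingDist_graphWord`.
-/

/-- The Hamming weight of a binary word. -/
def wt {X : Type*} [Fintype X] (u : X → Bool) : ℕ :=
  (Finset.univ.filter fun x => u x = true).card

/-- The support of a binary word. -/
def supp {X : Type*} [Fintype X] (u : X → Bool) : Finset X :=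
  Finset.univ.filter fun x => u x = true

/-- An `(n,t,w)`-constant-power cooling (CPC) code. -/
def IsCPCCode {X : Type*} [Fintype X] [DecidableEq X] {ι : Type*} (t w : ℕ)
    (C : ι → Set (X → Bool)) : Prop :=
  (∀ i, ∀ u ∈ C i, wt u = w) ∧
  (Pairwise fun i j => Disjoint (C i) (C j)) ∧
  (∀ S : Finset X, S.card = t → ∀ i, ∃ u ∈ C i, supp u ∩ S = ∅)

open Polynomial in
/-- The punctured Reed–Solomon family: `val c s` is the evaluation at `w` points of the unique
polynomial of degree at most `m` that takes the values `c` at `m` further points and the value `s`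
at the first of the `w` points. Two members agree in at most `m` positions, and in none at all if
they belong to the same `c`. -/
theorem exists_rs_family {F : Type*} [Field F] [Fintype F] [DecidableEq F] (w m : ℕ) (hw : 0 < w)
    (hcard : w + m ≤ Fintype.card F) :
    ∃ val : (Fin m → F) → F → Fin w → F,
      (∀ c s c' s', (c, s) ≠ (c', s') →
        (Finset.univ.filter fun j => val c s j = val c' s' j).card ≤ m) ∧
      (∀ c s s', s ≠ s' → ∀ j, val c s j ≠ val c s' j) := by
  obtain ⟨α⟩ : Nonempty (Fin w ⊕ Fin m ↪ F) :=
    Function.Embedding.nonempty_of_card_le (by simpa using hcard)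
  let v : Option (Fin m) → F := fun o => o.elim (α (Sum.inl ⟨0, hw⟩)) fun i => α (Sum.inr i)
  have hv : Function.Injective v := by
    rintro (_ | i) (_ | j) h
    · rfl
    · exact absurd (α.injective h) (by simp)
    · exact absurd (α.injective h) (by simp)
    · simpa using α.injective h
  let P : (Fin m → F) → F → F[X] := fun c s =>
    Lagrange.interpolate Finset.univ v fun o => o.elim s c
  have hdeg : ∀ c s, (P c s).degree < ((m + 1 : ℕ) : WithBot ℕ) := by
    intro c s
    have h := Lagrange.degree_interpolate_lt (s := Finset.univ) (v := v)
      (fun o => o.elim s c) hv.injOn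
    rwa [Finset.card_univ, Fintype.card_option, Fintype.card_fin] at h
  have heval : ∀ c s o, (P c s).eval (v o) = o.elim s c := fun c s o =>
    Lagrange.eval_interpolate_at_node _ hv.injOn (Finset.mem_univ o)
  have hinj : ∀ c s c' s', P c s = P c' s' → (c, s) = (c', s') := by
    intro c s c' s' h
    have hval : ∀ o : Option (Fin m), o.elim s c = o.elim s' c' := fun o => by
      rw [← heval c s o, ← heval c' s' o, h]
    exact Prod.ext (funext fun i => hval (some i)) (hval none)
  -- Agreement at more than `m` of the `w + m` points forces equality.
  have hkey : ∀ c s c' s' (T : Finset (Fin w ⊕ Fin m)), m < T.card →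
      (∀ x ∈ T, (P c s).eval (α x) = (P c' s').eval (α x)) → (c, s) = (c', s') := by
    intro c s c' s' T hT h
    refine hinj _ _ _ _ (Polynomial.eq_of_degrees_lt_of_eval_index_eq T α.injective.injOn
      ((hdeg c s).trans_le ?_) ((hdeg c' s').trans_le ?_) h) <;>
    exact_mod_cast hT
  refine ⟨fun c s j => (P c s).eval (α (Sum.inl j)), ?_, ?_⟩
  · intro c s c' s' hne
    by_contra! hlt
    refine hne (hkey c s c' s'
      ((Finset.univ.filter fun j => (P c s).eval (α (Sum.inl j)) =
        (P c' s').eval (α (Sum.inl j))).map ⟨Sum.inl, Sum.inl_injective⟩) (by simpa using hlt) ?_)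
    intro x hx
    obtain ⟨j, hj, rfl⟩ := Finset.mem_map.1 hx
    exact (Finset.mem_filter.1 hj).2
  · intro c s s' hne j hj
    -- The `m` points carrying `c` together with the `j`-th evaluation point are `m + 1` points.
    have := hkey c s c s'
      (insert (Sum.inl j) (Finset.univ.map ⟨Sum.inr, Sum.inr_injective⟩))
      (by rw [Finset.card_insert_of_notMem (by simp)]; simp) (by
        intro x hx
        rcases Finset.mem_insert.1 hx with rfl | hx
        · exact hj
        · obtain ⟨i, -, rfl⟩ := Finset.mem_map.1 hx
          exact (heval c s (some i)).trans (heval c s' (some i)).symm)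
    exact hne (Prod.ext_iff.1 this).2

/-- The indicator word of the graph `{(h j, j)}` of `h`, on coordinates identified with
`F × Fin w` by `φ`. -/
def graphWord {X F : Type*} [DecidableEq F] {w : ℕ} (φ : X ≃ F × Fin w) (h : Fin w → F) :
    X → Bool :=
  fun x => decide ((φ x).1 = h (φ x).2)

theorem wt_graphWord {X F : Type*} [Fintype X] [DecidableEq F] {w : ℕ}
    (φ : X ≃ F × Fin w) (h : Fin w → F) : wt (graphWord φ h) = w := by
  have hinj : Function.Injective fun j => φ.symm (h j, j) := fun i j hij =>
    (Prod.ext_iff.1 (φ.symm.injective hij)).2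
  have : (Finset.univ.filter fun x => graphWord φ h x = true) =
      Finset.univ.map ⟨fun j => φ.symm (h j, j), hinj⟩ := by
    ext x
    simp only [graphWord, Finset.mem_filter, Finset.mem_univ, true_and, decide_eq_true_eq,
      Finset.mem_map, Function.Embedding.coeFn_mk, Equiv.symm_apply_eq]
    constructor
    · intro hx
      exact ⟨(φ x).2, Prod.ext hx.symm rfl⟩
    · rintro ⟨j, hj⟩
      rw [← hj]
  rw [wt, this, Finset.card_map, Finset.card_univ, Fintype.card_fin]

/-- Every position at which `h` and `h'` differ contributes two coordinates at which the
indicator words of their graphs differ. -/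
theorem two_mul_le_hammingDist_graphWord {X F : Type*} [Fintype X] [DecidableEq F] {w : ℕ}
    (φ : X ≃ F × Fin w) (h h' : Fin w → F) :
    2 * (Finset.univ.filter fun j => h j ≠ h' j).card ≤
      hammingDist (graphWord φ h) (graphWord φ h') := by
  set D := Finset.univ.filter fun j => h j ≠ h' j with hD
  have hmem : ∀ j ∈ D, h j ≠ h' j := fun j hj => (Finset.mem_filter.1 hj).2
  have hcard : (D.disjSum D).card = 2 * D.card := by rw [Finset.card_disjSum, two_mul]
  rw [← hcard, hammingDist]
  refine Finset.card_le_card_of_injOn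
    (Sum.elim (fun j => φ.symm (h j, j)) fun j => φ.symm (h' j, j)) ?_ ?_
  · rintro (j | j) hj <;>
    · have := hmem j (by simpa using hj)
      simp [graphWord, this, this.symm]
  · rintro (i | i) hi (j | j) hj hij <;>
    · have := hmem i (by simpa using hi)
      simp only [Sum.elim_inl, Sum.elim_inr, EmbeddingLike.apply_eq_iff_eq, Prod.mk.injEq] at hij
      obtain ⟨hij, rfl⟩ := hij
      first
        | rfl
        | exact absurd hij this
        | exact absurd hij.symm this

/-- Let `w` and `e` be positive integers with `e < w`, and let `q` be a prime power with
`q ≥ 2w−e−1`. Then there exists a `(qw, q−1, w)`-CPC code of size `q^{w−e−1}` in which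
any two distinct codewords from the union of all codesets have Hamming distance at least
`2e+2` (so the code can correct `e` transmission errors). -/
theorem exists_cpecc_reed_solomon (w e q : ℕ) (hw : 0 < w) (he : 0 < e) (hew : e < w)
    (hq : IsPrimePow q) (hq2 : 2 * w - e - 1 ≤ q) :
    ∃ C : Fin (q ^ (w - e - 1)) → Set (Fin (q * w) → Bool),
      IsCPCCode (q - 1) w C ∧
      ∀ u ∈ ⋃ i, C i, ∀ v ∈ ⋃ i, C i, u ≠ v →
        2 * e + 2 ≤ hammingDist u v := by
  obtain ⟨p, n, hp, hn, rfl⟩ := (isPrimePow_nat_iff q).1 hq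
  have : Fact p.Prime := ⟨hp⟩
  classical
  let F := GaloisField p n
  let _ : Fintype F := Fintype.ofFinite F
  have hF : Fintype.card F = p ^ n := by
    rw [← Nat.card_eq_fintype_card]
    exact GaloisField.card p n hn.ne'
  obtain ⟨val, hagree, hdisj⟩ := exists_rs_family (F := F) w (w - e - 1) hw (by omega)
  have φ : Fin (p ^ n * w) ≃ F × Fin w := Fintype.equivOfCardEq (by simp [hF])
  have ψ : Fin ((p ^ n) ^ (w - e - 1)) ≃ (Fin (w - e - 1) → F) :=
    Fintype.equivOfCardEq (by simp [hF])
  have hdist : ∀ c s c' s', (c, s) ≠ (c', s') →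
      2 * e + 2 ≤ hammingDist (graphWord φ (val c s)) (graphWord φ (val c' s')) := by
    intro c s c' s' hne
    have h1 := hagree c s c' s' hne
    have h2 := two_mul_le_hammingDist_graphWord φ (val c s) (val c' s')
    have h3 := Finset.card_filter_add_card_filter_not (s := (Finset.univ : Finset (Fin w)))
      (fun j => val c s j = val c' s' j)
    rw [Finset.card_univ, Fintype.card_fin] at h3
    simp only [ne_eq] at h2
    omega
  refine ⟨fun i => Set.range fun s => graphWord φ (val (ψ i) s), ⟨?_, ?_, ?_⟩, ?_⟩
  · rintro i _ ⟨s, rfl⟩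
    exact wt_graphWord φ _
  · intro i j hij
    rw [Set.disjoint_left]
    rintro _ ⟨s, rfl⟩ ⟨s', hs'⟩
    have := hdist (ψ j) s' (ψ i) s fun h => hij (ψ.injective (Prod.ext_iff.1 h).1.symm)
    rw [show graphWord φ (val (ψ j) s') = graphWord φ (val (ψ i) s) from hs',
      hammingDist_self] at this
    omega
  · intro S hS i
    by_contra! hcon
    have hx : ∀ s, ∃ x ∈ S, graphWord φ (val (ψ i) s) x = true := by
      intro s
      obtain ⟨x, hx⟩ := hcon _ ⟨s, rfl⟩
      rw [Finset.mem_inter, supp, Finset.mem_filter] at hx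
      exact ⟨x, hx.2, hx.1.2⟩
    choose x hxS hx using hx
    -- The `q` supports in one codeset are pairwise disjoint, so `q - 1` points cannot meet all.
    have hinj : Function.Injective x := by
      intro s s' hss
      by_contra hne
      have h1 := of_decide_eq_true (hx s)
      have h2 := of_decide_eq_true (hx s')
      rw [← hss] at h2
      exact hdisj _ s s' hne _ (h1.symm.trans h2)
    have := Finset.card_le_card_of_injOn (s := Finset.univ) (t := S) x (fun s _ => hxS s)
      hinj.injOn
    rw [Finset.card_univ, hF, hS] at this
    have hpos : 0 < p ^ n := pow_pos hp.pos n
    omega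
  · intro u hu v hv huv
    obtain ⟨i, s, rfl⟩ := Set.mem_iUnion.1 hu
    obtain ⟨j, s', rfl⟩ := Set.mem_iUnion.1 hv
    refine hdist _ _ _ _ fun h => huv ?_
    obtain ⟨h1, h2⟩ := Prod.ext_iff.1 h
    simp only at h1 h2 ⊢
    rw [h1, h2]
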